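/- Let F : (ℤ → ℚ) → (ℤ → ℚ) be the cellular automaton global map induced by the local function f(u,v) = (1/2)·u·(u·v − 2·u − v + 4) (the rule of semigroup G₁₈). Suppose x : ℤ → ℚ satisfies x(i) ∈ {0,1,2} for all i ∈ ℤ. For i ∈ ℤ and k ∈ ℕ define H(i,k) by H(i,0) = x(i)·(2 − x(i)) and, for k ≥ 1, H(i,k) = x(i+k)·(2 − x(i+k)) · ∏_{j=0}^{k−1} (1/2)·x(i+j)·(x(i+j) − 1). Then for every n ∈ ℕ and every i ∈ ℤ, [F^[n] x] i = 1 − ∏_{k=0}^{n} (1 − H(i,k)) + 2·∏_{j=0}^{n} (1/2)·x(i+j)·(x(i+j) − 1). -/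

import Mathlib

/-!
On the states `{0, 1, 2}` the rule is the band in which `0` and `1` are left zeros and `2` is an
identity. For any band, associativity and idempotence collapse the iterates to
`F^[n + 1] x i = f (x i) (F^[n] x (i + 1))`. As a polynomial, `f u v = p u + q u * v`, where `p` and
`q` are the indicators of the states `1` and `2`, so this recursion is a Horner scheme, and it
unfolds to `F^[n] x i = ∑ k ≤ n, H i k + 2 * ∏ j ≤ n, q (x (i + j))`. Since `H i k` indicates that
`i + k` is the first cell from `i` on whose state is not `2`, and that its state is `1`, the `H i k`
are orthogonal idempotents, and the sum equals `1 - ∏ k ≤ n, (1 - H i k)`.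
-/

section GlobalMap

variable {ι A : Type*} [Add ι] [One ι]

/-- The global map of the cellular automaton with local function `f`, whose cell `i` reads the
cells `i` and `i + 1`. The index type `ι` may be, for instance, `ℤ`, `ℕ` or `ZMod m`. -/
def globalMap (f : A → A → A) (x : ι → A) (i : ι) : A :=
  f (x i) (x (i + 1))

variable {f : A → A → A} {S : Set A} {x : ι → A}

theorem iterate_globalMap_mem (hS : ∀ u ∈ S, ∀ v ∈ S, f u v ∈ S) (hx : ∀ i, x i ∈ S)
    (n : ℕ) (i : ι) : (globalMap f)^[n] x i ∈ S := by
  induction n generalizing i with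
  | zero => exact hx i
  | succ n ih =>
    rw [Function.iterate_succ_apply']
    exact hS _ (ih i) _ (ih (i + 1))

theorem iterate_succ_globalMap_of_assoc_of_idem (hS : ∀ u ∈ S, ∀ v ∈ S, f u v ∈ S)
    (assoc : ∀ u ∈ S, ∀ v ∈ S, ∀ w ∈ S, f (f u v) w = f u (f v w)) (idem : ∀ u ∈ S, f u u = u)
    (hx : ∀ i, x i ∈ S) (n : ℕ) (i : ι) :
    (globalMap f)^[n + 1] x i = f (x i) ((globalMap f)^[n] x (i + 1)) := by
  induction n generalizing i with
  | zero => rfl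
  | succ n ih =>
    have mem := iterate_globalMap_mem hS hx n
    set y := (globalMap f)^[n] x
    have step (j : ι) : (globalMap f)^[n + 1] x j = f (y j) (y (j + 1)) := by
      rw [Function.iterate_succ_apply', globalMap]
    have mem_pair := hS _ (mem (i + 1)) _ (mem (i + 1 + 1))
    calc (globalMap f)^[n + 1 + 1] x i
        = f ((globalMap f)^[n + 1] x i) ((globalMap f)^[n + 1] x (i + 1)) := by
          rw [Function.iterate_succ_apply', globalMap]
      _ = f (f (x i) (y (i + 1))) (f (y (i + 1)) (y (i + 1 + 1))) := by rw [ih, step]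
      _ = f (x i) (f (f (y (i + 1)) (y (i + 1))) (y (i + 1 + 1))) := by
          rw [assoc _ (hx i) _ (mem _) _ mem_pair, assoc _ (mem _) _ (mem _) _ (mem _)]
      _ = f (x i) ((globalMap f)^[n + 1] x (i + 1)) := by rw [idem _ (mem _), step]

end GlobalMap

section Shift

variable {ι M : Type*} [AddMonoidWithOne ι] [CommMonoid M]

theorem add_natCast_succ (i : ι) (k : ℕ) : i + (k + 1 : ℕ) = i + 1 + k := by
  rw [add_comm k, Nat.cast_add, Nat.cast_one, add_assoc]

theorem prod_range_succ_add_natCast (g : ι → M) (i : ι) (n : ℕ) :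
    ∏ j ∈ Finset.range (n + 1), g (i + j) = g i * ∏ j ∈ Finset.range n, g (i + 1 + j) := by
  simp only [Finset.prod_range_succ', add_natCast_succ, Nat.cast_zero, add_zero, mul_comm]

end Shift

section Rule

variable {K : Type*} [Field K]

/-- The local function of the semigroup `G₁₈`, as a polynomial. -/
def ruleG18 (u v : K) : K :=
  (1 / 2) * u * (u * v - 2 * u - v + 4)

/-- The polynomial that interpolates the indicator function of the state `1` among `0`, `1`, `2`. -/
def oneIndicator (u : K) : K :=
  u * (2 - u)

/-- The polynomial that interpolates the indicator function of the state `2` among `0`, `1`, `2`.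
In characteristic `2` it is the junk value `0`. -/
def twoIndicator (u : K) : K :=
  (1 / 2) * u * (u - 1)

theorem oneIndicator_mul_twoIndicator {u : K} (hu : u ∈ ({0, 1, 2} : Set K)) :
    oneIndicator u * twoIndicator u = 0 := by
  rcases hu with rfl | rfl | rfl <;> simp [oneIndicator, twoIndicator]

theorem isIdempotentElem_oneIndicator {u : K} (hu : u ∈ ({0, 1, 2} : Set K)) :
    IsIdempotentElem (oneIndicator u) := by
  rcases hu with rfl | rfl | rfl <;> norm_num [oneIndicator, IsIdempotentElem]

theorem ruleG18_zero_left (v : K) : ruleG18 0 v = 0 := by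
  simp [ruleG18]

variable [NeZero (2 : K)]

theorem isIdempotentElem_twoIndicator {u : K} (hu : u ∈ ({0, 1, 2} : Set K)) :
    IsIdempotentElem (twoIndicator u) := by
  have two_sub_one : (2 : K) - 1 = 1 := by norm_num
  rcases hu with rfl | rfl | rfl <;>
    simp [twoIndicator, two_sub_one, IsIdempotentElem, two_ne_zero (α := K)]

theorem ruleG18_one_left (v : K) : ruleG18 1 v = 1 := by
  have := two_ne_zero (α := K)
  rw [ruleG18]
  field_simp
  ring

theorem ruleG18_two_left (v : K) : ruleG18 2 v = v := by
  have := two_ne_zero (α := K)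
  rw [ruleG18]
  field_simp
  ring

theorem ruleG18_eq_add_mul (u v : K) :
    ruleG18 u v = oneIndicator u + twoIndicator u * v := by
  have := two_ne_zero (α := K)
  rw [ruleG18, oneIndicator, twoIndicator]
  field_simp
  ring

theorem ruleG18_two_right (u : K) : ruleG18 u 2 = u := by
  have := two_ne_zero (α := K)
  rw [ruleG18]
  field_simp
  ring

theorem ruleG18_mem {u v : K} (hu : u ∈ ({0, 1, 2} : Set K)) (hv : v ∈ ({0, 1, 2} : Set K)) :
    ruleG18 u v ∈ ({0, 1, 2} : Set K) := by
  rcases hu with rfl | rfl | rfl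
  · simp [ruleG18_zero_left]
  · simp [ruleG18_one_left]
  · rwa [ruleG18_two_left]

theorem ruleG18_assoc {u : K} (hu : u ∈ ({0, 1, 2} : Set K)) (v w : K) :
    ruleG18 (ruleG18 u v) w = ruleG18 u (ruleG18 v w) := by
  rcases hu with rfl | rfl | rfl
  · simp only [ruleG18_zero_left]
  · simp only [ruleG18_one_left]
  · simp only [ruleG18_two_left]

theorem ruleG18_self {u : K} (hu : u ∈ ({0, 1, 2} : Set K)) : ruleG18 u u = u := by
  rcases hu with rfl | rfl | rfl
  · exact ruleG18_zero_left 0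
  · exact ruleG18_one_left 1
  · exact ruleG18_two_left 2

end Rule

section FirstOne

variable {ι K : Type*} [AddMonoidWithOne ι] [Field K]

/-- The quantity `H i k`: on configurations with states `0`, `1`, `2`, the indicator of the event
that cell `i + k` has state `1` and the `k` cells from `i` up to it all have state `2`. -/
def firstOneIndicator (x : ι → K) (i : ι) (k : ℕ) : K :=
  oneIndicator (x (i + k)) * ∏ j ∈ Finset.range k, twoIndicator (x (i + j))

theorem firstOneIndicator_zero (x : ι → K) (i : ι) :
    firstOneIndicator x i 0 = oneIndicator (x i) := by
  simp [firstOneIndicator]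

theorem firstOneIndicator_succ (x : ι → K) (i : ι) (k : ℕ) :
    firstOneIndicator x i (k + 1) = twoIndicator (x i) * firstOneIndicator x (i + 1) k := by
  rw [firstOneIndicator, firstOneIndicator, add_natCast_succ,
    prod_range_succ_add_natCast fun i ↦ twoIndicator (x i), mul_left_comm]

theorem sum_firstOneIndicator_succ (x : ι → K) (i : ι) (n : ℕ) :
    ∑ k ∈ Finset.range (n + 1), firstOneIndicator x i k =
      oneIndicator (x i) +
        twoIndicator (x i) * ∑ k ∈ Finset.range n, firstOneIndicator x (i + 1) k := by
  simp only [Finset.sum_range_succ', firstOneIndicator_zero, firstOneIndicator_succ,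
    Finset.mul_sum, add_comm]

theorem firstOneIndicator_mul_eq_zero_of_lt {x : ι → K} (hx : ∀ i, x i ∈ ({0, 1, 2} : Set K))
    (i : ι) {j k : ℕ} (hjk : j < k) : firstOneIndicator x i j * firstOneIndicator x i k = 0 := by
  have dvd_prod : twoIndicator (x (i + j)) ∣ ∏ l ∈ Finset.range k, twoIndicator (x (i + l)) :=
    Finset.dvd_prod_of_mem (fun l : ℕ ↦ twoIndicator (x (i + l))) (Finset.mem_range.2 hjk)
  have mul_dvd : oneIndicator (x (i + j)) * twoIndicator (x (i + j)) ∣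
      firstOneIndicator x i j * firstOneIndicator x i k :=
    mul_dvd_mul (dvd_mul_right _ _) (dvd_prod.mul_left _)
  rwa [oneIndicator_mul_twoIndicator (hx _), zero_dvd_iff] at mul_dvd

theorem isIdempotentElem_firstOneIndicator [NeZero (2 : K)] {x : ι → K}
    (hx : ∀ i, x i ∈ ({0, 1, 2} : Set K)) (i : ι) (k : ℕ) :
    IsIdempotentElem (firstOneIndicator x i k) := by
  induction k generalizing i with
  | zero =>
    rw [firstOneIndicator_zero]
    exact isIdempotentElem_oneIndicator (hx i)
  | succ k ih =>
    rw [firstOneIndicator_succ]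
    exact (isIdempotentElem_twoIndicator (hx i)).mul (ih (i + 1))

theorem orthogonalIdempotents_firstOneIndicator [NeZero (2 : K)] {x : ι → K}
    (hx : ∀ i, x i ∈ ({0, 1, 2} : Set K)) (i : ι) :
    OrthogonalIdempotents (firstOneIndicator x i) where
  idem := isIdempotentElem_firstOneIndicator hx i
  ortho j k hjk := by
    rcases hjk.lt_or_gt with hlt | hgt
    · exact firstOneIndicator_mul_eq_zero_of_lt hx i hlt
    · rw [mul_comm]
      exact firstOneIndicator_mul_eq_zero_of_lt hx i hgt

theorem iterate_globalMap_ruleG18 [NeZero (2 : K)] {x : ι → K}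
    (hx : ∀ i, x i ∈ ({0, 1, 2} : Set K)) (n : ℕ) (i : ι) :
    (globalMap ruleG18)^[n] x i =
      ∑ k ∈ Finset.range (n + 1), firstOneIndicator x i k +
        2 * ∏ j ∈ Finset.range (n + 1), twoIndicator (x (i + j)) := by
  induction n generalizing i with
  | zero =>
    calc x i = oneIndicator (x i) + twoIndicator (x i) * 2 := by
          rw [← ruleG18_eq_add_mul, ruleG18_two_right]
      _ = _ := by simp [firstOneIndicator_zero, mul_comm]
  | succ n ih =>
    rw [iterate_succ_globalMap_of_assoc_of_idem (fun _ hu _ hv ↦ ruleG18_mem hu hv)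
        (fun _ hu v _ w _ ↦ ruleG18_assoc hu v w) (fun _ hu ↦ ruleG18_self hu) hx,
      ruleG18_eq_add_mul, ih, sum_firstOneIndicator_succ x i,
      prod_range_succ_add_natCast (fun i ↦ twoIndicator (x i)) i]
    ring

end FirstOne

theorem stmt_17_general {ι K : Type*} [AddMonoidWithOne ι] [Field K] [NeZero (2 : K)]
    (F : (ι → K) → (ι → K))
    (hF : ∀ x : ι → K, ∀ i : ι,
      F x i = (1 / 2) * x i * (x i * x (i + 1) - 2 * x i - x (i + 1) + 4))
    (x : ι → K) (hx : ∀ i : ι, x i ∈ ({0, 1, 2} : Set K))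
    (H : ι → ℕ → K)
    (hH0 : ∀ i : ι, H i 0 = x i * (2 - x i))
    (hHk : ∀ (i : ι) (k : ℕ), 1 ≤ k →
      H i k = x (i + k) * (2 - x (i + k)) *
        ∏ j ∈ Finset.range k, (1 / 2) * x (i + j) * (x (i + j) - 1))
    (n : ℕ) (i : ι) :
    F^[n] x i = 1 - (∏ k ∈ Finset.range (n + 1), (1 - H i k))
      + 2 * ∏ j ∈ Finset.range (n + 1), (1 / 2) * x (i + j) * (x (i + j) - 1) := by
  obtain rfl : F = globalMap ruleG18 := funext₂ hF
  obtain rfl : H = firstOneIndicator x := by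
    funext i k
    rcases k.eq_zero_or_pos with rfl | hk
    · rw [hH0, firstOneIndicator_zero, oneIndicator]
    · exact hHk i k hk
  rw [iterate_globalMap_ruleG18 hx, (orthogonalIdempotents_firstOneIndicator hx i).prod_one_sub,
    sub_sub_cancel]
  rfl

/-- Rule G₁₈. -/
theorem stmt_17 (F : (ℤ → ℚ) → (ℤ → ℚ))
    (hF : ∀ x : ℤ → ℚ, ∀ i : ℤ,
      F x i = (1 / 2) * x i * (x i * x (i + 1) - 2 * x i - x (i + 1) + 4))
    (x : ℤ → ℚ) (hx : ∀ i : ℤ, x i ∈ ({0, 1, 2} : Set ℚ))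
    (H : ℤ → ℕ → ℚ)
    (hH0 : ∀ i : ℤ, H i 0 = x i * (2 - x i))
    (hHk : ∀ (i : ℤ) (k : ℕ), 1 ≤ k →
      H i k = x (i + k) * (2 - x (i + k)) *
        ∏ j ∈ Finset.range k, (1 / 2) * x (i + j) * (x (i + j) - 1)) :
    ∀ (n : ℕ) (i : ℤ),
      F^[n] x i = 1 - (∏ k ∈ Finset.range (n + 1), (1 - H i k))
        + 2 * ∏ j ∈ Finset.range (n + 1), (1 / 2) * x (i + j) * (x (i + j) - 1) :=
  stmt_17_general F hF x hx H hH0 hHk
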